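/- Let (Y,σ) and (W,τ) be two strictly ergodic topological dynamical systems with unique invariant measures ρ_Y and ρ_W, and consider the system (Y × W, σ × id, id × τ). Then Q_{σ×id, id×τ}(Y × W) equals {((y,w),(y′,w),(y,w′),(y′,w′)) : y,y′ ∈ Y, w,w′ ∈ W}, the system (Q_{σ×id, id×τ}(Y × W), G_{σ×id, id×τ}) is uniquely ergodic with unique invariant measure ν_{σ×id, id×τ} where ν = ρ_Y ⊗ ρ_W, and under the homeomorphism ((y,w),(y′,w),(y,w′),(y′,w′)) ↦ (y,y′,w,w′) onto Y × Y × W × W this unique measure corresponds to ρ_Y ⊗ ρ_Y ⊗ ρ_W ⊗ ρ_W. -/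

import Mathlib

open MeasureTheory Topology

/-- The σ-algebra of `R`-invariant measurable sets. -/
def invSigma {X : Type*} [MeasurableSpace X] (R : X → X) : MeasurableSpace X where
  MeasurableSet' s := MeasurableSet s ∧ R ⁻¹' s = s
  measurableSet_empty := ⟨MeasurableSet.empty, rfl⟩
  measurableSet_compl s hs := ⟨hs.1.compl, by rw [Set.preimage_compl, hs.2]⟩
  measurableSet_iUnion f hf := ⟨MeasurableSet.iUnion fun i => (hf i).1, by
    rw [Set.preimage_iUnion]; exact Set.iUnion_congr fun i => (hf i).2⟩

/-- `μ2` is the relatively independent self-joining of `μ` over `I_R`. -/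
def IsRelIndJoining {X : Type*} [MeasurableSpace X] (μ : Measure X) (R : X → X)
    (μ2 : Measure (X × X)) : Prop :=
  ∀ f0 f1 : X → ℝ, Measurable f0 → Measurable f1 →
    (∃ C, ∀ x, |f0 x| ≤ C) → (∃ C, ∀ x, |f1 x| ≤ C) →
    ∫ p, f0 p.1 * f1 p.2 ∂μ2 =
      ∫ x, (μ[f0 | invSigma R]) x * (μ[f1 | invSigma R]) x ∂μ

/-- `μ4` is the relatively independent self-joining of `μ2` over `I_{T×T}`. -/
def IsHostJoining {X : Type*} [MeasurableSpace X] (μ2 : Measure (X × X)) (T : X → X)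
    (μ4 : Measure (X × X × X × X)) : Prop :=
  ∀ f0 f1 f2 f3 : X → ℝ, Measurable f0 → Measurable f1 → Measurable f2 → Measurable f3 →
    (∃ C, ∀ x, |f0 x| ≤ C) → (∃ C, ∀ x, |f1 x| ≤ C) →
    (∃ C, ∀ x, |f2 x| ≤ C) → (∃ C, ∀ x, |f3 x| ≤ C) →
    ∫ p, f0 p.1 * f1 p.2.1 * f2 p.2.2.1 * f3 p.2.2.2 ∂μ4 =
      ∫ q, (μ2[(fun r => f0 r.1 * f1 r.2) | invSigma (Prod.map T T)]) q *
           (μ2[(fun r => f2 r.1 * f3 r.2) | invSigma (Prod.map T T)]) q ∂μ2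

/-- The dynamical cube `Q_{S,T}(X)`. -/
def cubeQ {X : Type*} [TopologicalSpace X] (S T : X ≃ₜ X) : Set (X × X × X × X) :=
  closure {p | ∃ (x : X) (i j : ℤ),
    p = (x, (S.toEquiv ^ i) x, (T.toEquiv ^ j) x, (S.toEquiv ^ i) ((T.toEquiv ^ j) x))}

/-- The permutation `id × S × id × S` of `X⁴`. -/
def sideS {X : Type*} (S : X ≃ X) : Equiv.Perm (X × X × X × X) :=
  (Equiv.refl X).prodCongr (S.prodCongr ((Equiv.refl X).prodCongr S))

/-- The permutation `id × id × T × T` of `X⁴`. -/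
def sideT {X : Type*} (T : X ≃ X) : Equiv.Perm (X × X × X × X) :=
  (Equiv.refl X).prodCongr ((Equiv.refl X).prodCongr (T.prodCongr T))

/-- The diagonal permutation `g × g × g × g` of `X⁴`. -/
def diag4 {X : Type*} (g : X ≃ X) : Equiv.Perm (X × X × X × X) :=
  g.prodCongr (g.prodCongr (g.prodCongr g))

/-- The group `G_{S,T}`. -/
def GST {X : Type*} (S T : X ≃ X) : Subgroup (Equiv.Perm (X × X × X × X)) :=
  Subgroup.closure ({sideS S, sideT T} ∪
    {d | ∃ g ∈ Subgroup.closure {S, T}, d = diag4 g})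

/-!
The parallelograms `((y, w), (y', w), (y, w'), (y', w'))` are parametrized by `Y² × W²`, and in
these coordinates `G_{σ×id, id×τ}` is generated by `id × σ`, `σ × σ` acting on `Y²` and `id × τ`,
`τ × τ` acting on `W²`. Conditioning an invariant measure on one coordinate gives an invariant law
of the other, so unique ergodicity passes to `Y²`, to `W²` and to their product, with invariant
measure `ρ_Y ⊗ ρ_Y ⊗ ρ_W ⊗ ρ_W`. On the other hand `id × θ` with `θ` ergodic has only fibrewise
trivial invariant sets, so its relatively independent self-joining doubles the coordinate moved by
`θ`; doing this first for `σ` and then for `τ` yields the same measure.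
-/

open MeasurableSpace (invariants invariants_le measurable_invariants_dom
  measurable_invariants_of_semiconj)
open Function (LeftInverse Semiconj)

/-! ### Conditional expectation on invariant sets -/

section InvariantCondExp

variable {X A Z V E : Type*} [MeasurableSpace X] [MeasurableSpace A] [MeasurableSpace Z]
  [MeasurableSpace V] [NormedAddCommGroup E] [NormedSpace ℝ E]

lemma invSigma_eq_invariants (R : X → X) : invSigma R = invariants R := rfl

lemma setIntegral_prod_eq_integral_setIntegral {m : Measure Z} {ρ : Measure V} [SFinite m]
    [SFinite ρ] {s : Set (Z × V)} (hs : MeasurableSet s) {F : Z × V → E}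
    (hF : IntegrableOn F s (m.prod ρ)) :
    ∫ q in s, F q ∂(m.prod ρ) = ∫ z, ∫ v in Prod.mk z ⁻¹' s, F (z, v) ∂ρ ∂m := by
  rw [← integral_indicator hs, integral_prod _ ((integrable_indicator_iff hs).2 hF)]
  congr 1 with z
  exact integral_indicator (measurable_prodMk_left hs)

variable [CompleteSpace E]

/-- An invariant set of `id × θ` has null or conull fibres, so integrating over it only sees the
fibrewise means. -/
lemma condExp_invariants_prodMap_id {m : Measure Z} [IsFiniteMeasure m] {ρ : Measure V}
    [IsProbabilityMeasure ρ] {θ : V → V} (hθ : PreErgodic θ ρ) {F : Z × V → E}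
    (hF : Integrable F (m.prod ρ)) :
    (m.prod ρ)[F | invariants (Prod.map id θ)] =ᵐ[m.prod ρ]
      fun q => ∫ v, F (q.1, v) ∂ρ := by
  have hmean : Integrable (fun q : Z × V => ∫ v, F (q.1, v) ∂ρ) (m.prod ρ) :=
    hF.integral_prod_left.comp_fst ρ
  refine (ae_eq_condExp_of_forall_setIntegral_eq (invariants_le _) hF
    (fun _ _ _ => hmean.integrableOn) (fun s hs _ => ?_) ?_).symm
  · rw [setIntegral_prod_eq_integral_setIntegral hs.1 hmean.integrableOn,
      setIntegral_prod_eq_integral_setIntegral hs.1 hF.integrableOn]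
    congr 1 with z
    have hfibre : θ ⁻¹' (Prod.mk z ⁻¹' s) = Prod.mk z ⁻¹' s :=
      congrArg (Prod.mk z ⁻¹' ·) hs.2
    rcases hθ.ae_empty_or_univ (measurable_prodMk_left hs.1) hfibre with h | h <;>
      simp [setIntegral_congr_set h]
  · have hfst : Measurable[invariants (Prod.map id θ)] (Prod.fst : Z × V → Z) :=
      measurable_invariants_dom.2 ⟨measurable_fst, fun _ _ => rfl⟩
    have hfibre : AEStronglyMeasurable (fun z => ∫ v, F (z, v) ∂ρ) m := hF.1.integral_prod_right'
    exact ⟨hfibre.mk _ ∘ Prod.fst, hfibre.stronglyMeasurable_mk.comp_measurable hfst,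
      Measure.quasiMeasurePreserving_fst.ae_eq_comp hfibre.ae_eq_mk⟩

lemma condExp_invariants_map_comp {μ : Measure A} [IsFiniteMeasure μ] {T : A → A} {R : X → X}
    {π : A → X} {p : X → A} (hπ : Measurable π) (hp : Measurable p) (hpπ : LeftInverse p π)
    (hπT : Semiconj π T R) (hpR : Semiconj p R T) {F : X → E} (hF : Integrable F (μ.map π)) :
    (μ.map π)[F | invariants R] ∘ π =ᵐ[μ] μ[F ∘ π | invariants T] := by
  have hπinv := measurable_invariants_of_semiconj hπ hπT
  have hE : Integrable ((μ.map π)[F | invariants R]) (μ.map π) := integrable_condExp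
  refine ae_eq_condExp_of_forall_setIntegral_eq (invariants_le T) (hF.comp_measurable hπ)
    (fun _ _ _ => (hE.comp_measurable hπ).integrableOn) (fun s hs _ => ?_)
    (stronglyMeasurable_condExp.comp_measurable hπinv).aestronglyMeasurable
  have hps : MeasurableSet[invariants R] (p ⁻¹' s) := measurable_invariants_of_semiconj hp hpR hs
  have hs_eq : s = π ⁻¹' (p ⁻¹' s) := by rw [← Set.preimage_comp, hpπ.comp_eq_id, Set.preimage_id]
  calc ∫ a in s, (μ.map π)[F | invariants R] (π a) ∂μ
      = ∫ x in p ⁻¹' s, (μ.map π)[F | invariants R] x ∂(μ.map π) := by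
        rw [setIntegral_map hps.1 hE.1 hπ.aemeasurable, ← hs_eq]
    _ = ∫ x in p ⁻¹' s, F x ∂(μ.map π) := setIntegral_condExp (invariants_le R) hF hps
    _ = ∫ a in s, F (π a) ∂μ := by
        rw [setIntegral_map hps.1 hF.1 hπ.aemeasurable, ← hs_eq]

end InvariantCondExp

/-! ### Relatively independent joinings -/

section Joinings

variable {X Z V : Type*} [MeasurableSpace X] [MeasurableSpace Z] [MeasurableSpace V]

/-- The fibred square of `m ⊗ ρ` over `Z`, carried to `X × X` by a parametrization
`π : Z × V → X`: two points with the same `Z`-coordinate and independent `V`-coordinates. It is the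
relatively independent self-joining of the image of `m ⊗ ρ` under `π`. -/
noncomputable def fibredSquare (m : Measure Z) (ρ : Measure V) (π : Z × V → X) : Measure (X × X) :=
  (m.prod (ρ.prod ρ)).map fun q => (π (q.1, q.2.1), π (q.1, q.2.2))

lemma isFiniteMeasure_fibredSquare (m : Measure Z) [IsFiniteMeasure m] (ρ : Measure V)
    [IsFiniteMeasure ρ] (π : Z × V → X) : IsFiniteMeasure (fibredSquare m ρ π) :=
  Measure.isFiniteMeasure_map _ _

lemma integral_condExp_mul_condExp_eq_integral_fibredSquare {m : Measure Z}
    [IsFiniteMeasure m] {ρ : Measure V} [IsProbabilityMeasure ρ] {θ : V → V}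
    (hθ : PreErgodic θ ρ) {π : Z × V → X} {p : X → Z × V} {R : X → X}
    (hπ : Measurable π) (hp : Measurable p) (hpπ : LeftInverse p π)
    (hπR : Semiconj π (Prod.map id θ) R) (hpR : Semiconj p R (Prod.map id θ)) {F G : X → ℝ}
    (hF : Integrable F ((m.prod ρ).map π)) (hG : Integrable G ((m.prod ρ).map π))
    (hFG : Integrable (fun x : X × X => F x.1 * G x.2) (fibredSquare m ρ π)) :
    ∫ x, ((m.prod ρ).map π)[F | invariants R] x * ((m.prod ρ).map π)[G | invariants R] x
        ∂((m.prod ρ).map π) =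
      ∫ x, F x.1 * G x.2 ∂(fibredSquare m ρ π) := by
  have hmean {H : X → ℝ} (hH : Integrable H ((m.prod ρ).map π)) :
      ((m.prod ρ).map π)[H | invariants R] ∘ π =ᵐ[m.prod ρ] fun q => ∫ v, H (π (q.1, v)) ∂ρ :=
    (condExp_invariants_map_comp hπ hp hpπ hπR hpR hH).trans
      (condExp_invariants_prodMap_id hθ (hH.comp_measurable hπ))
  have hpair : Measurable fun q : Z × V × V => (π (q.1, q.2.1), π (q.1, q.2.2)) := by fun_prop
  calc _ = ∫ q, ((m.prod ρ).map π)[F | invariants R] (π q) *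
          ((m.prod ρ).map π)[G | invariants R] (π q) ∂(m.prod ρ) :=
        integral_map hπ.aemeasurable (integrable_condExp.1.mul integrable_condExp.1)
    _ = ∫ q : Z × V, (∫ v, F (π (q.1, v)) ∂ρ) * ∫ v, G (π (q.1, v)) ∂ρ ∂(m.prod ρ) :=
        integral_congr_ae ((hmean hF).mul (hmean hG))
    _ = ∫ z, (∫ v, F (π (z, v)) ∂ρ) * ∫ v, G (π (z, v)) ∂ρ ∂m := by
        rw [integral_fun_fst fun z => (∫ v, F (π (z, v)) ∂ρ) * ∫ v, G (π (z, v)) ∂ρ,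
          probReal_univ, one_smul]
    _ = ∫ z, ∫ q : V × V, F (π (z, q.1)) * G (π (z, q.2)) ∂(ρ.prod ρ) ∂m := by
        congr 1 with z
        exact (integral_prod_mul (fun v => F (π (z, v))) fun v => G (π (z, v))).symm
    _ = ∫ q : Z × V × V, F (π (q.1, q.2.1)) * G (π (q.1, q.2.2)) ∂(m.prod (ρ.prod ρ)) :=
        (integral_prod _ (hFG.comp_measurable hpair)).symm
    _ = ∫ x, F x.1 * G x.2 ∂(fibredSquare m ρ π) :=
        (integral_map hpair.aemeasurable hFG.1).symm

lemma exists_abs_indicator_one_le {X : Type*} (s : Set X) :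
    ∃ C, ∀ x, |s.indicator (1 : X → ℝ) x| ≤ C :=
  ⟨1, fun x => by by_cases hx : x ∈ s <;> simp [hx]⟩

lemma integrable_of_abs_le {μ : Measure X} [IsFiniteMeasure μ] {f : X → ℝ} (hf : Measurable f)
    (hfb : ∃ C, ∀ x, |f x| ≤ C) : Integrable f μ :=
  hfb.elim fun C hC => .of_bound hf.aestronglyMeasurable C (ae_of_all _ hC)

lemma exists_abs_mul_le {X Z : Type*} {f : X → ℝ} {g : Z → ℝ} (hf : ∃ C, ∀ x, |f x| ≤ C)
    (hg : ∃ C, ∀ z, |g z| ≤ C) : ∃ C, ∀ q : X × Z, |f q.1 * g q.2| ≤ C := by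
  obtain ⟨C, hC⟩ := hf
  obtain ⟨D, hD⟩ := hg
  refine ⟨C * D, fun q => ?_⟩
  rw [abs_mul]
  exact mul_le_mul (hC _) (hD _) (abs_nonneg _) ((abs_nonneg _).trans (hC q.1))

lemma isProbabilityMeasure_of_measureReal_univ {μ : Measure X} (h : μ.real Set.univ = 1) :
    IsProbabilityMeasure μ :=
  ⟨(ENNReal.toReal_eq_one_iff _).1 h⟩

lemma measure_ext_prod₄ {X₁ X₂ X₃ X₄ : Type*} [MeasurableSpace X₁] [MeasurableSpace X₂]
    [MeasurableSpace X₃] [MeasurableSpace X₄] {μ ν : Measure (X₁ × X₂ × X₃ × X₄)}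
    [IsFiniteMeasure μ]
    (h : ∀ {a : Set X₁} {b : Set X₂} {c : Set X₃} {d : Set X₄}, MeasurableSet a →
      MeasurableSet b → MeasurableSet c → MeasurableSet d →
      μ (a ×ˢ b ×ˢ c ×ˢ d) = ν (a ×ˢ b ×ˢ c ×ˢ d)) :
    μ = ν := by
  let B₂ := Set.image2 (· ×ˢ ·) {c : Set X₃ | MeasurableSet c} {d : Set X₄ | MeasurableSet d}
  let B₃ := Set.image2 (· ×ˢ ·) {b : Set X₂ | MeasurableSet b} B₂
  let B₄ := Set.image2 (· ×ˢ ·) {a : Set X₁ | MeasurableSet a} B₃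
  have hB₂ : IsCountablySpanning B₂ :=
    isCountablySpanning_measurableSet.prod isCountablySpanning_measurableSet
  have hB₃ : IsCountablySpanning B₃ := isCountablySpanning_measurableSet.prod hB₂
  have hgen₃ : MeasurableSpace.generateFrom B₃ = Prod.instMeasurableSpace :=
    generateFrom_eq_prod (by simp) generateFrom_prod isCountablySpanning_measurableSet hB₂
  have hgen₄ : MeasurableSpace.generateFrom B₄ = Prod.instMeasurableSpace :=
    generateFrom_eq_prod (by simp) hgen₃ isCountablySpanning_measurableSet hB₃
  have hpi : IsPiSystem B₄ := MeasurableSpace.isPiSystem_measurableSet.prod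
    (MeasurableSpace.isPiSystem_measurableSet.prod isPiSystem_prod)
  refine ext_of_generate_finite B₄ hgen₄.symm hpi ?_ ?_
  · rintro - ⟨a, ha, -, ⟨b, hb, -, ⟨c, hc, d, hd, rfl⟩, rfl⟩, rfl⟩
    exact h ha hb hc hd
  · simpa only [Set.univ_prod_univ] using h .univ .univ .univ .univ

namespace IsRelIndJoining

variable {μ : Measure X} {R : X → X} {ν ν' : Measure (X × X)}

lemma measureReal_prod (h : IsRelIndJoining μ R ν) {a b : Set X} (ha : MeasurableSet a)
    (hb : MeasurableSet b) :
    ν.real (a ×ˢ b) =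
      ∫ x, μ[a.indicator 1 | invSigma R] x * μ[b.indicator 1 | invSigma R] x ∂μ := by
  rw [← h _ _ (measurable_one.indicator ha) (measurable_one.indicator hb)
    (exists_abs_indicator_one_le a) (exists_abs_indicator_one_le b),
    ← integral_indicator_one (ha.prod hb)]
  simp only [← Set.indicator_prod_one, Prod.mk.eta]

variable [IsProbabilityMeasure μ]

lemma isProbabilityMeasure (h : IsRelIndJoining μ R ν) : IsProbabilityMeasure ν := by
  apply isProbabilityMeasure_of_measureReal_univ
  rw [← Set.univ_prod_univ, h.measureReal_prod .univ .univ, Set.indicator_univ,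
    invSigma_eq_invariants, Pi.one_def, condExp_const (invariants_le R)]
  simp

lemma unique (h : IsRelIndJoining μ R ν) (h' : IsRelIndJoining μ R ν') : ν = ν' := by
  have := h.isProbabilityMeasure
  have := h'.isProbabilityMeasure
  refine Measure.ext_prod fun ha hb => (measureReal_eq_measureReal_iff).1 ?_
  rw [h.measureReal_prod ha hb, h'.measureReal_prod ha hb]

end IsRelIndJoining

namespace IsHostJoining

variable {μ : Measure (X × X)} {T : X → X} {ν ν' : Measure (X × X × X × X)}

lemma measureReal_prod (h : IsHostJoining μ T ν) {a b c d : Set X} (ha : MeasurableSet a)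
    (hb : MeasurableSet b) (hc : MeasurableSet c) (hd : MeasurableSet d) :
    ν.real (a ×ˢ b ×ˢ c ×ˢ d) =
      ∫ q, μ[(a ×ˢ b).indicator 1 | invSigma (Prod.map T T)] q *
        μ[(c ×ˢ d).indicator 1 | invSigma (Prod.map T T)] q ∂μ := by
  have hbox := h _ _ _ _ (measurable_one.indicator ha) (measurable_one.indicator hb)
    (measurable_one.indicator hc) (measurable_one.indicator hd) (exists_abs_indicator_one_le a)
    (exists_abs_indicator_one_le b) (exists_abs_indicator_one_le c) (exists_abs_indicator_one_le d)
  rw [← integral_indicator_one (ha.prod (hb.prod (hc.prod hd)))]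
  simp only [mul_assoc] at hbox
  simpa only [← Set.indicator_prod_one] using hbox

variable [IsProbabilityMeasure μ]

lemma isProbabilityMeasure (h : IsHostJoining μ T ν) : IsProbabilityMeasure ν := by
  apply isProbabilityMeasure_of_measureReal_univ
  have huniv := h.measureReal_prod .univ .univ .univ .univ
  simp only [Set.univ_prod_univ, Set.indicator_univ] at huniv
  rw [huniv, invSigma_eq_invariants, Pi.one_def, condExp_const (invariants_le _)]
  simp

lemma unique (h : IsHostJoining μ T ν) (h' : IsHostJoining μ T ν') : ν = ν' := by
  have := h.isProbabilityMeasure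
  have := h'.isProbabilityMeasure
  refine measure_ext_prod₄ fun ha hb hc hd => (measureReal_eq_measureReal_iff).1 ?_
  rw [h.measureReal_prod ha hb hc hd, h'.measureReal_prod ha hb hc hd]

end IsHostJoining

lemma isRelIndJoining_fibredSquare {m : Measure Z} [IsFiniteMeasure m] {ρ : Measure V}
    [IsProbabilityMeasure ρ] {θ : V → V} (hθ : PreErgodic θ ρ) {π : Z × V → X} {p : X → Z × V}
    {R : X → X} (hπ : Measurable π) (hp : Measurable p) (hpπ : LeftInverse p π)
    (hπR : Semiconj π (Prod.map id θ) R) (hpR : Semiconj p R (Prod.map id θ)) :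
    IsRelIndJoining ((m.prod ρ).map π) R (fibredSquare m ρ π) := by
  have := isFiniteMeasure_fibredSquare m ρ π
  intro f₀ f₁ h₀ h₁ b₀ b₁
  exact (integral_condExp_mul_condExp_eq_integral_fibredSquare hθ hπ hp hpπ hπR hpR
    (integrable_of_abs_le h₀ b₀) (integrable_of_abs_le h₁ b₁)
    (integrable_of_abs_le (by fun_prop) (exists_abs_mul_le b₀ b₁))).symm

lemma isHostJoining_fibredSquare {m : Measure Z} [IsFiniteMeasure m] {ρ : Measure V}
    [IsProbabilityMeasure ρ] {θ : V → V} (hθ : PreErgodic θ ρ) {π : Z × V → X × X}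
    {p : X × X → Z × V} {T : X → X} (hπ : Measurable π) (hp : Measurable p)
    (hpπ : LeftInverse p π) (hπT : Semiconj π (Prod.map id θ) (Prod.map T T))
    (hpT : Semiconj p (Prod.map T T) (Prod.map id θ)) :
    IsHostJoining ((m.prod ρ).map π) T
      ((fibredSquare m ρ π).map MeasurableEquiv.prodAssoc) := by
  intro f₀ f₁ f₂ f₃ h₀ h₁ h₂ h₃ b₀ b₁ b₂ b₃
  have hpair := isRelIndJoining_fibredSquare (m := m) hθ hπ hp hpπ hπT hpT
    (fun r => f₀ r.1 * f₁ r.2) (fun r => f₂ r.1 * f₃ r.2) (by fun_prop) (by fun_prop)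
    (exists_abs_mul_le b₀ b₁) (exists_abs_mul_le b₂ b₃)
  rw [← hpair, integral_map_equiv]
  exact congrArg _ (funext fun _ => mul_assoc _ _ _)

end Joinings

/-! ### Unique ergodicity -/

/-- `ρ` is the only probability measure preserved by each map of the family `𝓕`. A family is
allowed because a group action is tested on generators. -/
structure IsUniquelyErgodic {V : Type*} [MeasurableSpace V] (𝓕 : Set (V → V)) (ρ : Measure V) :
    Prop where
  isProbabilityMeasure : IsProbabilityMeasure ρ
  measurePreserving : ∀ f ∈ 𝓕, MeasurePreserving f ρ ρ
  unique : ∀ ν : Measure V, IsProbabilityMeasure ν → (∀ f ∈ 𝓕, MeasurePreserving f ν ν) → ν = ρ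

namespace IsUniquelyErgodic

variable {V Z X : Type*} [MeasurableSpace V] [MeasurableSpace Z] [MeasurableSpace X]
  {𝓕 : Set (V → V)} {ρ : Measure V} {𝓖 : Set (Z → Z)} {η : Measure Z}

lemma ergodic {θ : V → V} (h : IsUniquelyErgodic {θ} ρ) : Ergodic θ ρ := by
  have hset : {ν | MeasurePreserving θ ν ν ∧ IsProbabilityMeasure ν} = {ρ} := by
    ext ν
    refine ⟨fun hν => h.unique ν hν.2 (by simpa using hν.1), ?_⟩
    rintro rfl
    exact ⟨h.measurePreserving θ rfl, h.isProbabilityMeasure⟩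
  exact Ergodic.of_mem_extremePoints (by simp [hset])

/-- Conditioned on any event of the first coordinate, the law of the second is again invariant,
hence equal to `η`. -/
lemma eq_fst_prod (h : IsUniquelyErgodic 𝓖 η) {κ : Measure (V × Z)} [IsFiniteMeasure κ]
    (hκ : ∀ g ∈ 𝓖, MeasurePreserving (Prod.map id g) κ κ) : κ = κ.fst.prod η := by
  have := h.isProbabilityMeasure
  refine (Measure.prod_eq fun a b ha hb => ?_).symm
  have hA : MeasurableSet (Prod.fst ⁻¹' a : Set (V × Z)) := measurable_fst ha
  rw [Measure.fst_apply ha]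
  rcases eq_or_ne (κ (Prod.fst ⁻¹' a)) 0 with h0 | h0
  · rw [h0, zero_mul]
    exact measure_mono_null (Set.prod_subset_preimage_fst a b) h0
  have := ProbabilityTheory.cond_isProbabilityMeasure h0
  have hcond : (ProbabilityTheory.cond κ (Prod.fst ⁻¹' a)).snd = η :=
    h.unique _ inferInstance fun g hg =>
      (measurable_snd.measurePreserving _).of_semiconj
        (((hκ g hg).restrict_preimage hA).smul_measure _) (fun _ => rfl)
        (h.measurePreserving g hg).measurable
  rw [← hcond, Measure.snd_apply hb, ProbabilityTheory.cond_apply hA,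
    ENNReal.mul_inv_cancel_left h0 (measure_ne_top κ _), Set.prod_eq]

lemma eq_prod (hρ : IsUniquelyErgodic 𝓕 ρ) (hη : IsUniquelyErgodic 𝓖 η) {κ : Measure (V × Z)}
    [IsProbabilityMeasure κ] (hfst : ∀ f ∈ 𝓕, MeasurePreserving f κ.fst κ.fst)
    (hsnd : ∀ g ∈ 𝓖, MeasurePreserving (Prod.map id g) κ κ) : κ = ρ.prod η := by
  rw [hη.eq_fst_prod hsnd, hρ.unique κ.fst inferInstance hfst]

lemma prod (hρ : IsUniquelyErgodic 𝓕 ρ) (hη : IsUniquelyErgodic 𝓖 η) :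
    IsUniquelyErgodic ((Prod.map · id) '' 𝓕 ∪ Prod.map id '' 𝓖) (ρ.prod η) := by
  have := hρ.isProbabilityMeasure
  have := hη.isProbabilityMeasure
  refine ⟨inferInstance, ?_, fun κ _ hκ => ?_⟩
  · rintro - (⟨f, hf, rfl⟩ | ⟨g, hg, rfl⟩)
    · exact (hρ.measurePreserving f hf).prod (.id η)
    · exact (MeasurePreserving.id ρ).prod (hη.measurePreserving g hg)
  · exact hρ.eq_prod hη
      (fun f hf => (measurable_fst.measurePreserving κ).of_semiconj
        (hκ _ (.inl ⟨f, hf, rfl⟩)) (fun _ => rfl) (hρ.measurePreserving f hf).measurable)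
      (fun g hg => hκ _ (.inr ⟨g, hg, rfl⟩))

lemma square {θ : V → V} (h : IsUniquelyErgodic {θ} ρ) :
    IsUniquelyErgodic {Prod.map id θ, Prod.map θ θ} (ρ.prod ρ) := by
  have := h.isProbabilityMeasure
  have hθ : MeasurePreserving θ ρ ρ := h.measurePreserving θ rfl
  refine ⟨inferInstance, ?_, fun κ _ hκ => ?_⟩
  · rintro - (rfl | rfl)
    · exact (MeasurePreserving.id ρ).prod hθ
    · exact hθ.prod hθ
  · have hfst : MeasurePreserving θ κ.fst κ.fst :=
      (measurable_fst.measurePreserving κ).of_semiconj (hκ _ (.inr rfl)) (fun _ => rfl)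
        hθ.measurable
    exact h.eq_prod h (by simpa using hfst) (by simpa using hκ _ (.inl rfl))

lemma eq_map_of_semiconj (h : IsUniquelyErgodic 𝓕 ρ) {Φ : V → X} {P : X → V}
    (hΦ : Measurable Φ) (hP : Measurable P) {lam : Measure X} [IsProbabilityMeasure lam]
    (hΦP : Φ ∘ P =ᵐ[lam] id)
    (hinv : ∀ f ∈ 𝓕, ∃ g : X → X,
      (∀ s, MeasurableSet s → lam (g ⁻¹' s) = lam s) ∧ Semiconj P g f) :
    lam = ρ.map Φ := by
  have hmap : lam.map P = ρ := by
    refine h.unique _ (Measure.isProbabilityMeasure_map hP.aemeasurable) fun f hf => ?_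
    obtain ⟨g, hg, hgf⟩ := hinv f hf
    have hfm : Measurable f := (h.measurePreserving f hf).measurable
    refine ⟨hfm, Measure.ext fun s hs => ?_⟩
    rw [Measure.map_apply hfm hs, Measure.map_apply hP (hfm hs), Measure.map_apply hP hs,
      ← hg _ (hP hs), ← Set.preimage_comp, ← Set.preimage_comp, hgf.comp_eq]
  calc lam = lam.map (Φ ∘ P) := by rw [Measure.map_congr hΦP, Measure.map_id]
    _ = ρ.map Φ := by rw [← Measure.map_map hΦ hP, hmap]

end IsUniquelyErgodic

/-! ### The cube group -/

section CubeGroup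

variable {X V : Type*}

lemma GST_le_iff {S T : Equiv.Perm X} {H : Subgroup (Equiv.Perm (X × X × X × X))} :
    GST S T ≤ H ↔ (sideS S ∈ H ∧ sideT T ∈ H) ∧ diag4 S ∈ H ∧ diag4 T ∈ H := by
  let diag : Equiv.Perm X →* Equiv.Perm (X × X × X × X) := .mk' diag4 fun _ _ => rfl
  have hdiag : {d | ∃ g ∈ Subgroup.closure {S, T}, d = diag4 g} ⊆ (H : Set _) ↔
      Subgroup.closure {S, T} ≤ H.comap diag :=
    ⟨fun h g hg => h ⟨g, hg, rfl⟩, by rintro h - ⟨g, hg, rfl⟩; exact h hg⟩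
  rw [GST, Subgroup.closure_le, Set.union_subset_iff, hdiag, Subgroup.closure_le,
    Set.pair_subset_iff, Set.pair_subset_iff]
  rfl

variable [MeasurableSpace X] [MeasurableSpace V]

/-- The group of bi-measurable permutations of `X` that preserve `ν`, so that invariance under a
group of permutations needs to be checked on generators only. -/
def measurePreservingPerm (ν : Measure X) : Subgroup (Equiv.Perm X) where
  carrier := {e | MeasurePreserving e ν ν ∧ Measurable e.symm}
  mul_mem' he hf := ⟨he.1.comp hf.1, hf.2.comp he.2⟩
  one_mem' := ⟨.id ν, measurable_id⟩
  inv_mem' {e} he := ⟨.symm ⟨e, he.1.measurable, he.2⟩ he.1, he.1.measurable⟩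

lemma mem_measurePreservingPerm_of_semiconj {κ : Measure V} {ν : Measure X} {Φ : V → X} {f : V → V}
    {e : Equiv.Perm X} (hΦ : MeasurePreserving Φ κ ν) (hf : MeasurePreserving f κ κ)
    (hfe : Semiconj Φ f e) (he : Measurable e) (he_symm : Measurable e.symm) :
    e ∈ measurePreservingPerm ν :=
  ⟨hΦ.of_semiconj hf hfe he, he_symm⟩

lemma measurable_sideS {S : X ≃ X} (hS : Measurable S) : Measurable (sideS S) :=
  measurable_id.prodMap (hS.prodMap (measurable_id.prodMap hS))

lemma measurable_sideT {T : X ≃ X} (hT : Measurable T) : Measurable (sideT T) :=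
  measurable_id.prodMap (measurable_id.prodMap (hT.prodMap hT))

lemma measurable_diag4 {g : X ≃ X} (hg : Measurable g) : Measurable (diag4 g) :=
  hg.prodMap (hg.prodMap (hg.prodMap hg))

end CubeGroup

/-! ### Parallelograms -/

section Parallelograms

variable {Y W : Type*}

/-- The parallelogram in `Y × W` with sides `y, y'` and `w, w'`, as a point of `(Y × W)⁴`. The
coordinates are grouped as `((y, y'), (w, w'))` because the two sides move independently. -/
def parallelogram (q : (Y × Y) × (W × W)) : (Y × W) × (Y × W) × (Y × W) × (Y × W) :=
  ((q.1.1, q.2.1), (q.1.2, q.2.1), (q.1.1, q.2.2), (q.1.2, q.2.2))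

/-- The sides of a parallelogram, read off its first three vertices; outside the set of
parallelograms the value is junk. -/
def parallelogramCoords (q : (Y × W) × (Y × W) × (Y × W) × (Y × W)) : (Y × Y) × (W × W) :=
  ((q.1.1, q.2.1.1), (q.1.2, q.2.2.1.2))

lemma leftInverse_parallelogramCoords :
    LeftInverse parallelogramCoords (parallelogram : (Y × Y) × (W × W) → _) := fun _ => rfl

lemma range_parallelogram :
    Set.range (parallelogram : (Y × Y) × (W × W) → _) =
      {q | ∃ (y y' : Y) (w w' : W), q = ((y, w), (y', w), (y, w'), (y', w'))} := by
  ext q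
  constructor
  · rintro ⟨⟨⟨y, y'⟩, w, w'⟩, rfl⟩
    exact ⟨y, y', w, w', rfl⟩
  · rintro ⟨y, y', w, w', rfl⟩
    exact ⟨((y, y'), (w, w')), rfl⟩

/-- The generators of `G_{σ×id, id×τ}` in the coordinates `((y, y'), (w, w'))`. -/
def cubeGenerators (σ : Y → Y) (τ : W → W) : Set ((Y × Y) × (W × W) → (Y × Y) × (W × W)) :=
  (Prod.map · id) '' {Prod.map id σ, Prod.map σ σ} ∪ Prod.map id '' {Prod.map id τ, Prod.map τ τ}

lemma exists_mem_GST_semiconj (σ : Equiv.Perm Y) (τ : Equiv.Perm W) :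
    ∀ f ∈ cubeGenerators σ τ, ∃ g ∈ GST (σ.prodCongr (.refl W)) ((Equiv.refl Y).prodCongr τ),
      Semiconj parallelogramCoords g f := by
  obtain ⟨⟨hsideS, hsideT⟩, hdiagS, hdiagT⟩ :=
    GST_le_iff.1 (le_refl (GST (σ.prodCongr (.refl W)) ((Equiv.refl Y).prodCongr τ)))
  rintro - (⟨-, rfl | rfl, rfl⟩ | ⟨-, rfl | rfl, rfl⟩)
  · exact ⟨_, hsideS, fun _ => rfl⟩
  · exact ⟨_, hdiagS, fun _ => rfl⟩
  · exact ⟨_, hsideT, fun _ => rfl⟩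
  · exact ⟨_, hdiagT, fun _ => rfl⟩

lemma prodCongr_zpow (e : Equiv.Perm Y) (f : Equiv.Perm W) (i : ℤ) :
    (e.prodCongr f : Equiv.Perm (Y × W)) ^ i = (e ^ i).prodCongr (f ^ i) := by
  let prodHom : Equiv.Perm Y × Equiv.Perm W →* Equiv.Perm (Y × W) :=
    .mk' (fun p => p.1.prodCongr p.2) fun _ _ => rfl
  exact (map_zpow prodHom (e, f) i).symm

section Topology

variable [TopologicalSpace Y] [TopologicalSpace W]

lemma dense_orbitPairs {σ : Y ≃ₜ Y}
    (hσ : ∀ y y' : Y, y' ∈ closure {z | ∃ i : ℤ, z = (σ.toEquiv ^ i) y}) :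
    Dense {p : Y × Y | ∃ i : ℤ, p.2 = (σ.toEquiv ^ i) p.1} :=
  fun p => map_mem_closure (Continuous.prodMk_right p.1) (hσ p.1 p.2) fun _ hz => hz

lemma isClosedEmbedding_parallelogram [T2Space Y] [T2Space W] :
    IsClosedEmbedding (parallelogram : (Y × Y) × (W × W) → _) :=
  leftInverse_parallelogramCoords.isClosedEmbedding
    (by unfold parallelogramCoords; fun_prop) (by unfold parallelogram; fun_prop)

lemma cubeQ_eq_image_closure [T2Space Y] [T2Space W] (σ : Y ≃ₜ Y) (τ : W ≃ₜ W) :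
    cubeQ (σ.prodCongr (.refl W)) ((Homeomorph.refl Y).prodCongr τ) =
      parallelogram '' closure ({p : Y × Y | ∃ i : ℤ, p.2 = (σ.toEquiv ^ i) p.1} ×ˢ
        {p : W × W | ∃ j : ℤ, p.2 = (τ.toEquiv ^ j) p.1}) := by
  have hS (i : ℤ) : (σ.prodCongr (.refl W)).toEquiv ^ i = (σ.toEquiv ^ i).prodCongr (.refl W) :=
    (prodCongr_zpow σ.toEquiv 1 i).trans (by rw [one_zpow]; rfl)
  have hT (j : ℤ) : ((Homeomorph.refl Y).prodCongr τ).toEquiv ^ j =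
      (Equiv.refl Y).prodCongr (τ.toEquiv ^ j) :=
    (prodCongr_zpow 1 τ.toEquiv j).trans (by rw [one_zpow]; rfl)
  rw [← isClosedEmbedding_parallelogram.closure_image_eq, cubeQ]
  congr 1 with q
  simp only [hS, hT]
  constructor
  · rintro ⟨⟨y, w⟩, i, j, rfl⟩
    exact ⟨((y, _), (w, _)), ⟨⟨i, rfl⟩, j, rfl⟩, rfl⟩
  · rintro ⟨⟨⟨y, y'⟩, w, w'⟩, ⟨⟨i, hi⟩, j, hj⟩, rfl⟩
    obtain rfl : y' = (σ.toEquiv ^ i) y := hi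
    obtain rfl : w' = (τ.toEquiv ^ j) w := hj
    exact ⟨(y, w), i, j, rfl⟩

lemma cubeQ_eq_range_parallelogram [T2Space Y] [T2Space W] {σ : Y ≃ₜ Y} {τ : W ≃ₜ W}
    (hσ : ∀ y y' : Y, y' ∈ closure {z | ∃ i : ℤ, z = (σ.toEquiv ^ i) y})
    (hτ : ∀ w w' : W, w' ∈ closure {z | ∃ j : ℤ, z = (τ.toEquiv ^ j) w}) :
    cubeQ (σ.prodCongr (.refl W)) ((Homeomorph.refl Y).prodCongr τ) = Set.range parallelogram := by
  rw [cubeQ_eq_image_closure, ((dense_orbitPairs hσ).prod (dense_orbitPairs hτ)).closure_eq,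
    Set.image_univ]

end Topology

section Measure

variable [MeasurableSpace Y] [MeasurableSpace W]

lemma measurable_parallelogram : Measurable (parallelogram : (Y × Y) × (W × W) → _) := by
  unfold parallelogram
  fun_prop

lemma measurable_parallelogramCoords :
    Measurable (parallelogramCoords : _ → (Y × Y) × (W × W)) := by
  unfold parallelogramCoords
  fun_prop

lemma measurableSet_range_parallelogram [MeasurableEq Y] [MeasurableEq W] :
    MeasurableSet (Set.range (parallelogram : (Y × Y) × (W × W) → _)) := by
  have hrange : Set.range (parallelogram : (Y × Y) × (W × W) → _) =
      {q | (q.2.1.2 = q.1.2 ∧ q.2.2.1.1 = q.1.1) ∧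
        q.2.2.2.1 = q.2.1.1 ∧ q.2.2.2.2 = q.2.2.1.2} := by
    ext q
    constructor
    · rintro ⟨q, rfl⟩
      exact ⟨⟨rfl, rfl⟩, rfl, rfl⟩
    · rintro ⟨⟨h₁, h₂⟩, h₃, h₄⟩
      exact ⟨parallelogramCoords q, Prod.ext rfl (Prod.ext (Prod.ext rfl h₁.symm)
        (Prod.ext (Prod.ext h₂.symm rfl) (Prod.ext h₃.symm h₄.symm)))⟩
  rw [hrange]
  refine .inter (.inter ?_ ?_) (.inter ?_ ?_) <;>
    exact measurableSet_eq_fun (by fun_prop) (by fun_prop)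

lemma map_parallelogram_compl_range [MeasurableEq Y] [MeasurableEq W]
    (κ : Measure ((Y × Y) × (W × W))) :
    κ.map parallelogram (Set.range parallelogram)ᶜ = 0 :=
  mem_ae_iff.1 (ae_map_mem_range _ measurableSet_range_parallelogram κ)

lemma GST_le_measurePreservingPerm {σ : Equiv.Perm Y} {τ : Equiv.Perm W} (hσ : Measurable σ)
    (hσ_symm : Measurable σ.symm) (hτ : Measurable τ) (hτ_symm : Measurable τ.symm)
    {κ : Measure ((Y × Y) × (W × W))} (hκ : ∀ f ∈ cubeGenerators σ τ, MeasurePreserving f κ κ) :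
    GST (σ.prodCongr (.refl W)) ((Equiv.refl Y).prodCongr τ) ≤
      measurePreservingPerm (κ.map parallelogram) := by
  have hΦ := measurable_parallelogram.measurePreserving κ
  have hS : Measurable (σ.prodCongr (.refl W)) := hσ.prodMap measurable_id
  have hS_symm : Measurable (σ.prodCongr (.refl W)).symm := hσ_symm.prodMap measurable_id
  have hT : Measurable ((Equiv.refl Y).prodCongr τ) := measurable_id.prodMap hτ
  have hT_symm : Measurable ((Equiv.refl Y).prodCongr τ).symm := measurable_id.prodMap hτ_symm
  refine GST_le_iff.2 ⟨⟨?_, ?_⟩, ?_, ?_⟩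
  · exact mem_measurePreservingPerm_of_semiconj hΦ (hκ _ (.inl ⟨_, .inl rfl, rfl⟩)) (fun _ => rfl)
      (measurable_sideS hS) (measurable_sideS hS_symm)
  · exact mem_measurePreservingPerm_of_semiconj hΦ (hκ _ (.inr ⟨_, .inl rfl, rfl⟩)) (fun _ => rfl)
      (measurable_sideT hT) (measurable_sideT hT_symm)
  · exact mem_measurePreservingPerm_of_semiconj hΦ (hκ _ (.inl ⟨_, .inr rfl, rfl⟩)) (fun _ => rfl)
      (measurable_diag4 hS) (measurable_diag4 hS_symm)
  · exact mem_measurePreservingPerm_of_semiconj hΦ (hκ _ (.inr ⟨_, .inr rfl, rfl⟩)) (fun _ => rfl)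
      (measurable_diag4 hT) (measurable_diag4 hT_symm)

lemma IsUniquelyErgodic.eq_map_parallelogram {σ : Equiv.Perm Y} {τ : Equiv.Perm W}
    {κ : Measure ((Y × Y) × (W × W))} (hκ : IsUniquelyErgodic (cubeGenerators σ τ) κ)
    {lam : Measure ((Y × W) × (Y × W) × (Y × W) × (Y × W))} [IsProbabilityMeasure lam]
    (hlam : lam (Set.range parallelogram)ᶜ = 0)
    (hinv : ∀ g ∈ GST (σ.prodCongr (.refl W)) ((Equiv.refl Y).prodCongr τ),
      ∀ s, MeasurableSet s → lam (g ⁻¹' s) = lam s) :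
    lam = κ.map parallelogram := by
  refine hκ.eq_map_of_semiconj measurable_parallelogram measurable_parallelogramCoords ?_
    fun f hf => ?_
  · filter_upwards [mem_ae_iff.2 hlam]
    rintro - ⟨q, rfl⟩
    exact congrArg parallelogram (leftInverse_parallelogramCoords q)
  · obtain ⟨g, hg, hgf⟩ := exists_mem_GST_semiconj σ τ f hf
    exact ⟨g, hinv g hg, hgf⟩

lemma IsRelIndJoining.eq_map_of_prod {σ : Y → Y} {ρY : Measure Y} [IsProbabilityMeasure ρY]
    {ρW : Measure W} [IsProbabilityMeasure ρW] (hσ : PreErgodic σ ρY)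
    {νS : Measure ((Y × W) × (Y × W))}
    (h : IsRelIndJoining (ρY.prod ρW) (Prod.map σ id) νS) :
    νS = ((ρY.prod ρY).prod ρW).map fun q => ((q.1.1, q.2), (q.1.2, q.2)) := by
  have hjoin : IsRelIndJoining ((ρW.prod ρY).map Prod.swap) (Prod.map σ id)
      (fibredSquare ρW ρY Prod.swap) :=
    isRelIndJoining_fibredSquare hσ measurable_swap measurable_swap Prod.swap_leftInverse
      (fun _ => rfl) fun _ => rfl
  rw [Measure.prod_swap] at hjoin
  rw [h.unique hjoin, fibredSquare, ← Measure.prod_swap (μ := ρY.prod ρY),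
    Measure.map_map (by fun_prop) measurable_swap]
  rfl

lemma IsHostJoining.eq_map_parallelogram {τ : W → W} {κ : Measure (Y × Y)} {ρW : Measure W}
    [IsProbabilityMeasure κ] [IsProbabilityMeasure ρW] (hτ : PreErgodic τ ρW)
    {νST : Measure ((Y × W) × (Y × W) × (Y × W) × (Y × W))}
    (h : IsHostJoining ((κ.prod ρW).map fun q => ((q.1.1, q.2), (q.1.2, q.2)))
      (Prod.map id τ) νST) :
    νST = (κ.prod (ρW.prod ρW)).map parallelogram := by
  have hπ : Measurable fun q : (Y × Y) × W => ((q.1.1, q.2), (q.1.2, q.2)) := by fun_prop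
  have hp : Measurable fun q : (Y × W) × (Y × W) => ((q.1.1, q.2.1), q.1.2) := by fun_prop
  have := Measure.isProbabilityMeasure_map (μ := κ.prod ρW) hπ.aemeasurable
  rw [h.unique (isHostJoining_fibredSquare hτ hπ hp (fun _ => rfl) (fun _ => rfl) fun _ => rfl),
    fibredSquare, Measure.map_map MeasurableEquiv.prodAssoc.measurable (by fun_prop)]
  rfl

end Measure

end Parallelograms

theorem cube_of_product_uniquely_ergodic_general
    {Y : Type*} [TopologicalSpace Y] [T2Space Y] [MeasurableSpace Y] [BorelSpace Y]
    [MeasurableEq Y]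
    {W : Type*} [TopologicalSpace W] [T2Space W] [MeasurableSpace W] [BorelSpace W]
    [MeasurableEq W]
    (σ : Y ≃ₜ Y) (τ : W ≃ₜ W) (ρY : Measure Y) (ρW : Measure W)
    (hYmin : ∀ y y' : Y, y' ∈ closure {z | ∃ i : ℤ, z = (σ.toEquiv ^ i) y})
    (hY : IsUniquelyErgodic {⇑σ} ρY)
    (hWmin : ∀ w w' : W, w' ∈ closure {z | ∃ j : ℤ, z = (τ.toEquiv ^ j) w})
    (hW : IsUniquelyErgodic {⇑τ} ρW)
    (νS : Measure ((Y × W) × (Y × W)))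
    (hνS : IsRelIndJoining (ρY.prod ρW) ⇑(σ.prodCongr (Homeomorph.refl W)) νS)
    (νST : Measure ((Y × W) × (Y × W) × (Y × W) × (Y × W)))
    (hνST : IsHostJoining νS ⇑((Homeomorph.refl Y).prodCongr τ) νST) :
    cubeQ (σ.prodCongr (Homeomorph.refl W)) ((Homeomorph.refl Y).prodCongr τ) =
      {q : (Y × W) × (Y × W) × (Y × W) × (Y × W) | ∃ (y y' : Y) (w w' : W),
        q = ((y, w), (y', w), (y, w'), (y', w'))} ∧
    IsProbabilityMeasure νST ∧
    νST (cubeQ (σ.prodCongr (Homeomorph.refl W)) ((Homeomorph.refl Y).prodCongr τ))ᶜ = 0 ∧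
    (∀ g ∈ GST (σ.prodCongr (Homeomorph.refl W)).toEquiv
        ((Homeomorph.refl Y).prodCongr τ).toEquiv,
      ∀ s : Set ((Y × W) × (Y × W) × (Y × W) × (Y × W)),
        MeasurableSet s → νST (⇑g ⁻¹' s) = νST s) ∧
    (∀ lam : Measure ((Y × W) × (Y × W) × (Y × W) × (Y × W)),
      IsProbabilityMeasure lam →
      lam (cubeQ (σ.prodCongr (Homeomorph.refl W)) ((Homeomorph.refl Y).prodCongr τ))ᶜ = 0 →
      (∀ g ∈ GST (σ.prodCongr (Homeomorph.refl W)).toEquiv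
          ((Homeomorph.refl Y).prodCongr τ).toEquiv,
        ∀ s : Set ((Y × W) × (Y × W) × (Y × W) × (Y × W)),
          MeasurableSet s → lam (⇑g ⁻¹' s) = lam s) →
      lam = νST) ∧
    Measure.map (fun q : (Y × W) × (Y × W) × (Y × W) × (Y × W) =>
        (q.1.1, q.2.1.1, q.1.2, q.2.2.1.2)) νST =
      ρY.prod (ρY.prod (ρW.prod ρW)) := by
  have := hY.isProbabilityMeasure
  have := hW.isProbabilityMeasure
  have hκ : IsUniquelyErgodic (cubeGenerators σ τ) ((ρY.prod ρY).prod (ρW.prod ρW)) :=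
    hY.square.prod hW.square
  obtain rfl : νST = ((ρY.prod ρY).prod (ρW.prod ρW)).map parallelogram := by
    rw [hνS.eq_map_of_prod hY.ergodic.toPreErgodic] at hνST
    exact hνST.eq_map_parallelogram hW.ergodic.toPreErgodic
  have hGST := GST_le_measurePreservingPerm (σ := σ.toEquiv) (τ := τ.toEquiv) σ.measurable
    σ.symm.measurable τ.measurable τ.symm.measurable hκ.measurePreserving
  rw [cubeQ_eq_range_parallelogram hYmin hWmin]
  refine ⟨range_parallelogram, ?_, map_parallelogram_compl_range _,
    fun g hg s hs => (hGST hg).1.measure_preimage hs.nullMeasurableSet,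
    fun lam _ hlam hinv => hκ.eq_map_parallelogram hlam hinv, ?_⟩
  · exact Measure.isProbabilityMeasure_map measurable_parallelogram.aemeasurable
  · rw [Measure.map_map (by fun_prop) measurable_parallelogram]
    exact Measure.prodAssoc_prod

/-- for the product of two strictly ergodic systems, the cube
`Q_{σ×id, id×τ}(Y × W)` is the explicit set of parallelograms, the cube system is uniquely
ergodic with unique invariant measure `ν_{σ×id, id×τ}` (where `ν = ρ_Y ⊗ ρ_W`), and under
`((y,w),(y′,w),(y,w′),(y′,w′)) ↦ (y,y′,w,w′)` that measure corresponds to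
`ρ_Y ⊗ ρ_Y ⊗ ρ_W ⊗ ρ_W`. -/
theorem cube_of_product_uniquely_ergodic
    {Y : Type*} [MetricSpace Y] [CompactSpace Y] [MeasurableSpace Y] [BorelSpace Y]
    {W : Type*} [MetricSpace W] [CompactSpace W] [MeasurableSpace W] [BorelSpace W]
    (σ : Y ≃ₜ Y) (τ : W ≃ₜ W)
    (ρY : Measure Y) (ρW : Measure W)
    (hYmin : ∀ y y' : Y, y' ∈ closure {z | ∃ i : ℤ, z = (σ.toEquiv ^ i) y})
    (hρY : IsProbabilityMeasure ρY) (hρYinv : MeasurePreserving ⇑σ ρY ρY)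
    (hYuniq : ∀ ν : Measure Y, IsProbabilityMeasure ν → MeasurePreserving ⇑σ ν ν → ν = ρY)
    (hWmin : ∀ w w' : W, w' ∈ closure {z | ∃ j : ℤ, z = (τ.toEquiv ^ j) w})
    (hρW : IsProbabilityMeasure ρW) (hρWinv : MeasurePreserving ⇑τ ρW ρW)
    (hWuniq : ∀ ν : Measure W, IsProbabilityMeasure ν → MeasurePreserving ⇑τ ν ν → ν = ρW)
    -- ν_{σ×id} and ν_{σ×id, id×τ}, the joinings of ν = ρY ⊗ ρW
    (νS : Measure ((Y × W) × (Y × W)))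
    (hνS : IsRelIndJoining (ρY.prod ρW) ⇑(σ.prodCongr (Homeomorph.refl W)) νS)
    (νST : Measure ((Y × W) × (Y × W) × (Y × W) × (Y × W)))
    (hνST : IsHostJoining νS ⇑((Homeomorph.refl Y).prodCongr τ) νST) :
    -- the cube is the set of parallelograms
    cubeQ (σ.prodCongr (Homeomorph.refl W)) ((Homeomorph.refl Y).prodCongr τ) =
      {q : (Y × W) × (Y × W) × (Y × W) × (Y × W) | ∃ (y y' : Y) (w w' : W),
        q = ((y, w), (y', w), (y, w'), (y', w'))} ∧
    -- the cube system is uniquely ergodic with unique invariant measure ν_{σ×id, id×τ}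
    IsProbabilityMeasure νST ∧
    νST (cubeQ (σ.prodCongr (Homeomorph.refl W)) ((Homeomorph.refl Y).prodCongr τ))ᶜ = 0 ∧
    (∀ g ∈ GST (σ.prodCongr (Homeomorph.refl W)).toEquiv
        ((Homeomorph.refl Y).prodCongr τ).toEquiv,
      ∀ s : Set ((Y × W) × (Y × W) × (Y × W) × (Y × W)),
        MeasurableSet s → νST (⇑g ⁻¹' s) = νST s) ∧
    (∀ lam : Measure ((Y × W) × (Y × W) × (Y × W) × (Y × W)),
      IsProbabilityMeasure lam →
      lam (cubeQ (σ.prodCongr (Homeomorph.refl W)) ((Homeomorph.refl Y).prodCongr τ))ᶜ = 0 →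
      (∀ g ∈ GST (σ.prodCongr (Homeomorph.refl W)).toEquiv
          ((Homeomorph.refl Y).prodCongr τ).toEquiv,
        ∀ s : Set ((Y × W) × (Y × W) × (Y × W) × (Y × W)),
          MeasurableSet s → lam (⇑g ⁻¹' s) = lam s) →
      lam = νST) ∧
    -- under (y,y',w,w') coordinates the unique measure is ρY ⊗ ρY ⊗ ρW ⊗ ρW
    Measure.map (fun q : (Y × W) × (Y × W) × (Y × W) × (Y × W) =>
        (q.1.1, q.2.1.1, q.1.2, q.2.2.1.2)) νST =
      ρY.prod (ρY.prod (ρW.prod ρW)) :=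
  cube_of_product_uniquely_ergodic_general σ τ ρY ρW
    hYmin ⟨hρY, by simpa using hρYinv, by simpa using hYuniq⟩
    hWmin ⟨hρW, by simpa using hρWinv, by simpa using hWuniq⟩ νS hνS νST hνST
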